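/- Let Θ̃ ⊆ Θ ⊆ ℝ^p and let the true parameter θ₀ lie in the interior of Θ̃ (interior taken in ℝ^p). Suppose the unconstrained estimators T_n satisfy (C1), (C2), and (C3), i.e., for given measurable functions G_n : ℝ^p → ℝ^k and a probability distribution Q on ℝ^k, G_n(T_n) converges in distribution to Q. Then the constrained estimators also satisfy (C3): G_n(T̃_n) converges in distribution to Q. -/

import Mathlib

open MeasureTheory Filter Topology

/-!
With probability tending to one, `h n` has a unique maximizer over `Θ`, namely `T n`, and `T n` is
close enough to `θ₀` to lie in `Θt`. There the maximum over `Θ` is attained inside `Θt`, so any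
maximizer over `Θt` is a maximizer over `Θ`, and uniqueness forces `Tt n = T n`. Changing a bounded
random variable on an event of vanishing probability does not change the limit of its expectation.
-/

section Maximizers

variable {α β : Type*} [Preorder β] {g : α → β} {S S' : Set α} {x y : α}

theorem isMaxOn_of_isMaxOn_of_mem (hx : IsMaxOn g S x) (hxS' : x ∈ S') (hy : IsMaxOn g S' y) :
    IsMaxOn g S y :=
  fun _ hz => le_trans (hx hz) (hy hxS')

theorem eq_of_existsUnique_isMaxOn (hS : S' ⊆ S) (hunique : ∃! z, z ∈ S ∧ IsMaxOn g S z)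
    (hx : IsMaxOn g S x) (hxS' : x ∈ S') (hy : IsMaxOn g S' y) (hyS' : y ∈ S') : x = y :=
  hunique.unique ⟨hS hxS', hx⟩ ⟨hS hyS', isMaxOn_of_isMaxOn_of_mem hx hxS' hy⟩

end Maximizers

section Measure

variable {Ω ι : Type*} [MeasurableSpace Ω] {μ : Measure Ω} {l : Filter ι} {A B : ι → Set Ω}

theorem tendsto_measure_sdiff_of_tendsto_zero {a : ENNReal}
    (hA : Tendsto (fun i => μ (A i)) l (𝓝 a)) (hB : Tendsto (fun i => μ (B i)) l (𝓝 0)) :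
    Tendsto (fun i => μ (A i \ B i)) l (𝓝 a) := by
  have hsub : Tendsto (fun i => μ (A i) - μ (B i)) l (𝓝 a) := by
    simpa only [tsub_zero] using ENNReal.Tendsto.sub hA hB (Or.inr ENNReal.zero_ne_top)
  exact tendsto_of_tendsto_of_tendsto_of_le_of_le hsub hA (fun _ => le_measure_sdiff)
    fun _ => measure_mono Set.sdiff_subset

theorem tendsto_measure_compl_zero [IsFiniteMeasure μ] (hmeas : ∀ i, NullMeasurableSet (A i) μ)
    (hA : Tendsto (fun i => μ (A i)) l (𝓝 (μ Set.univ))) :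
    Tendsto (fun i => μ (A i)ᶜ) l (𝓝 0) := by
  simp_rw [fun i => measure_compl₀ (hmeas i) (measure_ne_top μ _)]
  simpa only [tsub_self] using
    ENNReal.Tendsto.sub tendsto_const_nhds hA (Or.inl (measure_ne_top μ Set.univ))

theorem tendstoInMeasure_const_of_tendsto_measure_dist_lt {E : Type*} [PseudoMetricSpace E]
    [MeasurableSpace E] [OpensMeasurableSpace E] [IsFiniteMeasure μ] {T : ι → Ω → E} {c : E}
    (hT : ∀ i, AEMeasurable (T i) μ)
    (h : ∀ ε > 0, Tendsto (fun i => μ {ω | dist (T i ω) c < ε}) l (𝓝 (μ Set.univ))) :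
    TendstoInMeasure μ T l fun _ => c := by
  rw [tendstoInMeasure_iff_dist]
  intro ε hε
  have hmeas : ∀ i, NullMeasurableSet {ω | dist (T i ω) c < ε} μ := fun i =>
    (hT i).nullMeasurableSet_preimage Metric.isOpen_ball.measurableSet
  simpa only [Set.compl_ofPred, not_lt] using tendsto_measure_compl_zero hmeas (h ε hε)

variable {V : Type*} [NormedAddCommGroup V] [NormedSpace ℝ V] [IsFiniteMeasure μ] {C : ℝ}

theorem norm_integral_sub_integral_le {f g : Ω → V} (hf : Integrable f μ) (hg : Integrable g μ)
    (hC : ∀ ω, ‖f ω - g ω‖ ≤ C) :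
    ‖∫ ω, f ω ∂μ - ∫ ω, g ω ∂μ‖ ≤ C * μ.real {ω | f ω = g ω}ᶜ := by
  have hsupp : ∀ ω, ω ∉ {ω | f ω = g ω}ᶜ → f ω - g ω = 0 := fun ω hω =>
    sub_eq_zero.2 (not_not.1 hω)
  rw [← integral_sub hf hg, ← setIntegral_eq_integral_of_forall_compl_eq_zero hsupp]
  exact norm_setIntegral_le_of_norm_le_const (measure_lt_top μ _) fun ω _ => hC ω

theorem tendsto_integral_of_eqOn {X Y : ι → Ω → V} {v : V} (hX : ∀ i, Integrable (X i) μ)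
    (hY : ∀ i, Integrable (Y i) μ) (hC : ∀ i ω, ‖Y i ω - X i ω‖ ≤ C)
    (hYX : ∀ i, Set.EqOn (Y i) (X i) (A i))
    (hA : Tendsto (fun i => μ (A i)) l (𝓝 (μ Set.univ)))
    (hlim : Tendsto (fun i => ∫ ω, X i ω ∂μ) l (𝓝 v)) :
    Tendsto (fun i => ∫ ω, Y i ω ∂μ) l (𝓝 v) := by
  -- `A i` need not be measurable, but it is contained in the null-measurable set `{Y i = X i}`.
  have heq : Tendsto (fun i => μ {ω | Y i ω = X i ω}) l (𝓝 (μ Set.univ)) :=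
    tendsto_of_tendsto_of_tendsto_of_le_of_le hA tendsto_const_nhds
      (fun i => measure_mono (hYX i)) fun _ => measure_mono (Set.subset_univ _)
  have hne : Tendsto (fun i => μ {ω | Y i ω = X i ω}ᶜ) l (𝓝 0) :=
    tendsto_measure_compl_zero
      (fun i => (hY i).aestronglyMeasurable.nullMeasurableSet_eq_fun (hX i).aestronglyMeasurable)
      heq
  have hne_real : Tendsto (fun i => μ.real {ω | Y i ω = X i ω}ᶜ) l (𝓝 0) :=
    (ENNReal.tendsto_toReal ENNReal.zero_ne_top).comp hne
  have hbound : Tendsto (fun i => C * μ.real {ω | Y i ω = X i ω}ᶜ) l (𝓝 0) := by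
    simpa only [mul_zero] using hne_real.const_mul C
  have hdiff : Tendsto (fun i => ∫ ω, Y i ω ∂μ - ∫ ω, X i ω ∂μ) l (𝓝 0) :=
    squeeze_zero_norm (fun i => norm_integral_sub_integral_le (hY i) (hX i) (hC i)) hbound
  simpa only [sub_add_cancel, zero_add] using hdiff.add hlim

end Measure

section Estimators

variable {Ω ι E β : Type*} [MeasurableSpace Ω] {P : Measure Ω} {l : Filter ι}
  [PseudoEMetricSpace E] [Preorder β] {Θ Θt : Set E} {θ₀ : E} {h : ι → Ω → E → β}
  {T Tt : ι → Ω → E}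

theorem tendsto_measure_unconstrained_eq_constrained [IsProbabilityMeasure P] (hsub : Θt ⊆ Θ)
    (hθ₀ : Θt ∈ 𝓝[Θ] θ₀)
    (hT : ∀ n ω, (∃ x ∈ Θ, IsMaxOn (h n ω) Θ x) → T n ω ∈ Θ ∧ IsMaxOn (h n ω) Θ (T n ω))
    (hTt : ∀ n ω, (∃ x ∈ Θt, IsMaxOn (h n ω) Θt x) →
      Tt n ω ∈ Θt ∧ IsMaxOn (h n ω) Θt (Tt n ω))
    (hunique : Tendsto (fun n => P {ω | ∃! x, x ∈ Θ ∧ IsMaxOn (h n ω) Θ x}) l (𝓝 1))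
    (hconsistent : TendstoInMeasure P T l fun _ => θ₀) :
    Tendsto (fun n => P {ω | T n ω = Tt n ω}) l (𝓝 1) := by
  obtain ⟨ε, hε, hball⟩ := EMetric.mem_nhdsWithin_iff.1 hθ₀
  have heq : ∀ n, {ω | ∃! x, x ∈ Θ ∧ IsMaxOn (h n ω) Θ x} \ {ω | ε ≤ edist (T n ω) θ₀} ⊆
      {ω | T n ω = Tt n ω} := by
    rintro n ω ⟨hω, hnear⟩
    obtain ⟨hTΘ, hTmax⟩ := hT n ω hω.exists
    have hTΘt : T n ω ∈ Θt := hball ⟨Metric.mem_eball.2 (lt_of_not_ge hnear), hTΘ⟩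
    obtain ⟨hTtΘt, hTtmax⟩ := hTt n ω ⟨T n ω, hTΘt, hTmax.on_subset hsub⟩
    exact eq_of_existsUnique_isMaxOn hsub hω hTmax hTΘt hTtmax hTtΘt
  exact tendsto_of_tendsto_of_tendsto_of_le_of_le
    (tendsto_measure_sdiff_of_tendsto_zero hunique (hconsistent ε hε)) tendsto_const_nhds
    (fun n => measure_mono (heq n)) fun _ => prob_le_one

theorem constrained_estimator_convergence_in_distribution_general [IsProbabilityMeasure P]
    {F : Type*} [TopologicalSpace F] [MeasurableSpace F] [OpensMeasurableSpace F]
    {G : ι → E → F} {Q : Measure F} (hsub : Θt ⊆ Θ) (hθ₀ : Θt ∈ 𝓝[Θ] θ₀)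
    (hGT : ∀ n, AEMeasurable (fun ω => G n (T n ω)) P)
    (hGTt : ∀ n, AEMeasurable (fun ω => G n (Tt n ω)) P)
    (hT : ∀ n ω, (∃ x ∈ Θ, IsMaxOn (h n ω) Θ x) → T n ω ∈ Θ ∧ IsMaxOn (h n ω) Θ (T n ω))
    (hTt : ∀ n ω, (∃ x ∈ Θt, IsMaxOn (h n ω) Θt x) →
      Tt n ω ∈ Θt ∧ IsMaxOn (h n ω) Θt (Tt n ω))
    (hC1 : Tendsto (fun n => P {ω | ∃! x, x ∈ Θ ∧ IsMaxOn (h n ω) Θ x}) l (𝓝 1))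
    (hC2 : TendstoInMeasure P T l fun _ => θ₀)
    (hC3 : ∀ f : BoundedContinuousFunction F ℝ,
      Tendsto (fun n => ∫ ω, f (G n (T n ω)) ∂P) l (𝓝 (∫ x, f x ∂Q)))
    (f : BoundedContinuousFunction F ℝ) :
    Tendsto (fun n => ∫ ω, f (G n (Tt n ω)) ∂P) l (𝓝 (∫ x, f x ∂Q)) := by
  have hint : ∀ {Z : Ω → F}, AEMeasurable Z P → Integrable (fun ω => f (Z ω)) P := fun hZ =>
    .of_bound (f.continuous.measurable.comp_aemeasurable hZ).aestronglyMeasurable ‖f‖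
      (.of_forall fun _ => f.norm_coe_le_norm _)
  have heq := tendsto_measure_unconstrained_eq_constrained hsub hθ₀ hT hTt hC1 hC2
  have hdist : ∀ n ω, ‖f (G n (Tt n ω)) - f (G n (T n ω))‖ ≤ 2 * ‖f‖ := fun n ω =>
    (dist_eq_norm _ _).symm.trans_le (f.dist_le_two_norm _ _)
  have heqOn : ∀ n, Set.EqOn (fun ω => f (G n (Tt n ω))) (fun ω => f (G n (T n ω)))
      {ω | T n ω = Tt n ω} := fun n _ hω => congrArg (fun x => f (G n x)) (Eq.symm hω)
  exact tendsto_integral_of_eqOn (fun n => hint (hGT n)) (fun n => hint (hGTt n)) hdist heqOn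
    (by simpa only [measure_univ] using heq) (hC3 f)

end Estimators

/-- Theorem 3(b): if the unconstrained estimators `T n` satisfy (C1), (C2) and (C3)
(`G n (T n)` converges in distribution to `Q`), and the true parameter `θ₀` lies in the
interior of the constrained set `Θt ⊆ Θ`, then the constrained estimators `Tt n` also
satisfy (C3): `G n (Tt n)` converges in distribution to `Q`.  Convergence in distribution
is expressed by convergence of integrals of bounded continuous functions. -/
theorem constrained_estimator_convergence_in_distribution
    {Ω : Type*} [MeasurableSpace Ω] (P : Measure Ω) [IsProbabilityMeasure P]
    {p k : ℕ} (Θ Θt : Set (EuclideanSpace ℝ (Fin p))) (hsub : Θt ⊆ Θ)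
    (θ₀ : EuclideanSpace ℝ (Fin p)) (hθ₀ : θ₀ ∈ interior Θt)
    (h : ℕ → Ω → EuclideanSpace ℝ (Fin p) → ℝ)
    (T Tt : ℕ → Ω → EuclideanSpace ℝ (Fin p))
    (hTmeas : ∀ n, Measurable (T n)) (hTtmeas : ∀ n, Measurable (Tt n))
    (G : ℕ → EuclideanSpace ℝ (Fin p) → EuclideanSpace ℝ (Fin k))
    (hGmeas : ∀ n, Measurable (G n))
    (Q : Measure (EuclideanSpace ℝ (Fin k))) [IsProbabilityMeasure Q]
    -- `T n ω` is a maximizer of `h n ω` over `Θ` whenever one exists (arbitrary otherwise)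
    (hT : ∀ n ω, (∃ x ∈ Θ, IsMaxOn (h n ω) Θ x) →
      T n ω ∈ Θ ∧ IsMaxOn (h n ω) Θ (T n ω))
    -- `Tt n ω` is a maximizer of `h n ω` over `Θt` whenever one exists (arbitrary otherwise)
    (hTt : ∀ n ω, (∃ x ∈ Θt, IsMaxOn (h n ω) Θt x) →
      Tt n ω ∈ Θt ∧ IsMaxOn (h n ω) Θt (Tt n ω))
    -- (C1): the probability that a unique maximizer over `Θ` exists tends to 1
    (hC1 : Tendsto (fun n => P {ω | ∃! x, x ∈ Θ ∧ IsMaxOn (h n ω) Θ x}) atTop (𝓝 1))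
    -- (C2): weak consistency of `T n` for `θ₀`
    (hC2 : ∀ ε > 0, Tendsto (fun n => P {ω | ‖T n ω - θ₀‖ < ε}) atTop (𝓝 1))
    -- (C3) for the unconstrained estimator: `G n (T n)` converges in distribution to `Q`
    (hC3 : ∀ f : BoundedContinuousFunction (EuclideanSpace ℝ (Fin k)) ℝ,
      Tendsto (fun n => ∫ ω, f (G n (T n ω)) ∂P) atTop (𝓝 (∫ x, f x ∂Q))) :
    -- (C3) for the constrained estimator
    ∀ f : BoundedContinuousFunction (EuclideanSpace ℝ (Fin k)) ℝ,
      Tendsto (fun n => ∫ ω, f (G n (Tt n ω)) ∂P) atTop (𝓝 (∫ x, f x ∂Q)) := by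
  have hC2' : TendstoInMeasure P T atTop fun _ => θ₀ :=
    tendstoInMeasure_const_of_tendsto_measure_dist_lt (fun n => (hTmeas n).aemeasurable)
      (by simpa only [dist_eq_norm, measure_univ] using hC2)
  exact constrained_estimator_convergence_in_distribution_general hsub
    (mem_nhdsWithin_of_mem_nhds (mem_interior_iff_mem_nhds.1 hθ₀))
    (fun n => ((hGmeas n).comp (hTmeas n)).aemeasurable)
    (fun n => ((hGmeas n).comp (hTtmeas n)).aemeasurable) hT hTt hC1 hC2' hC3
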